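/- arXiv:math/0512084 — 3 statements merged into one kernel-verified Lean document; each statement's English description precedes it below -/
import Mathlib

section
/- Let U ⊆ ℝ^{4r} be open and let f^X_{iA}, f_X^{iA} be a smooth field of vielbeins on U. Suppose there are smooth functions Γ_{YZ}{}^X (connection coefficients) and ω̂_{YA}{}^B (a GL(r,ℍ)-connection 1-form) on U such that for all indices ∂_Y f^X_{iA} - Σ_B ω̂_{YA}{}^B f^X_{iB} + Σ_Z f^Z_{iA} Γ_{YZ}{}^X = 0 on U. Then the smooth fields of structure matrices J^a (a = 1,2,3) are covariantly constant: ∂_Y (J^a)_X{}^Z + Σ_W Γ_{YW}{}^Z (J^a)_X{}^W - Σ_W Γ_{YX}{}^W (J^a)_W{}^Z = 0 on U for all a, X, Y, Z. -/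
noncomputable section

/-- The totally antisymmetric Levi-Civita symbol on `Fin 3`, with `eps3 0 1 2 = 1`. -/
def eps3 (a b c : Fin 3) : ℝ :=
  (((b.val : ℝ) - (a.val : ℝ)) * ((c.val : ℝ) - (b.val : ℝ)) * ((c.val : ℝ) - (a.val : ℝ))) / 2

/-- The standard Pauli matrices `σ^1, σ^2, σ^3`. -/
def pauli : Fin 3 → Matrix (Fin 2) (Fin 2) ℂ :=
  ![!![0, 1; 1, 0], !![0, -Complex.I; Complex.I, 0], !![1, 0; 0, -1]]

/-- The 2×2 antisymmetric symbol, `eps2 0 1 = 1 = -eps2 1 0` (indices `1,2` are `0,1`). -/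
def eps2 (i j : Fin 2) : ℂ := ((j.val : ℂ)) - ((i.val : ℂ))

/-- A vielbein: mutually inverse complex arrays `f_X^{iA}`, `f^X_{iA}` satisfying the
reality conditions with respect to `ε` and the symplectic matrix `ρ` (with `ρ^{AB}` given
by `rho` and `ρ_{AB}` by `rhoLow`). -/
def IsVielbein {r : ℕ} (rho rhoLow : Fin (2*r) → Fin (2*r) → ℂ)
    (f fUp : Fin (4*r) → Fin 2 → Fin (2*r) → ℂ) : Prop :=
  (∀ A B, rho A B = - rho B A) ∧
  (∀ A B, rhoLow A B = starRingEnd ℂ (rho A B)) ∧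
  (∀ A C, (∑ B, rho A B * rhoLow C B) = if A = C then 1 else 0) ∧
  (∀ X Y, (∑ i, ∑ A, f X i A * fUp Y i A) = if X = Y then 1 else 0) ∧
  (∀ i A j B, (∑ X, f X i A * fUp X j B)
      = (if i = j then 1 else 0) * (if A = B then 1 else 0)) ∧
  (∀ X i A, starRingEnd ℂ (fUp X i A) = ∑ j, ∑ B, eps2 i j * rho A B * fUp X j B) ∧
  (∀ X i A, starRingEnd ℂ (f X i A) = ∑ j, ∑ B, eps2 i j * rhoLow A B * f X j B)

/-- The structure matrices `(J^a)_X{}^Y = -i Σ_{i,j,A} (σ^a)_i{}^j f_X^{iA} f^Y_{jA}`. -/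
def JmatF {r : ℕ} (f fUp : Fin (4*r) → Fin 2 → Fin (2*r) → ℂ) (a : Fin 3)
    (X Y : Fin (4*r)) : ℂ :=
  -Complex.I * ∑ i, ∑ j, ∑ A, pauli a i j * f X i A * fUp Y j A

/-!
Collect the vielbein and its inverse into matrix-valued functions `F = (f_X^{iA})` and
`E = (f^X_{iA})`, so that `F E = 1`, `E F = 1` and `J^a = F S E` with `S = -i σ^a ⊗ 1`. The
hypothesis reads `dE = Ω E - E Γ` with `Ω = 1 ⊗ ω̂`, and differentiating `F E = 1` turns it into
`dF = Γ F - F Ω`. The Leibniz rule then gives `dJ + J Γ - Γ J = F [S, Ω] E`, and the commutator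
vanishes because `S` and `Ω` act on different tensor factors.
-/

open Filter Matrix
open scoped Kronecker Topology

section FrameAlgebra

variable {R m n : Type*} [Fintype m] [Fintype n]

theorem coframe_deriv_eq [Ring R] [DecidableEq m] [DecidableEq n] {F dF : Matrix n m R}
    {E dE : Matrix m n R} {Ω : Matrix m m R} {G : Matrix n n R} (hFE : F * E = 1)
    (hEF : E * F = 1) (hLeibniz : dF * E + F * dE = 0) (hdE : dE = Ω * E - E * G) :
    dF = G * F - F * Ω :=
  calc
    dF = dF * E * F := by rw [Matrix.mul_assoc, hEF, Matrix.mul_one]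
    _ = -(F * (Ω * E - E * G)) * F := by rw [eq_neg_of_add_eq_zero_left hLeibniz, hdE]
    _ = F * E * G * F - F * Ω * (E * F) := by
      simp only [Matrix.mul_sub, Matrix.sub_mul, Matrix.mul_assoc, neg_sub]
    _ = G * F - F * Ω := by rw [hFE, hEF, Matrix.one_mul, Matrix.mul_one]

theorem covariant_deriv_mul_mul_eq [NonUnitalRing R] {F dF : Matrix n m R} {E dE : Matrix m n R}
    {Ω : Matrix m m R} {G : Matrix n n R} (S : Matrix m m R) (hdF : dF = G * F - F * Ω)
    (hdE : dE = Ω * E - E * G) :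
    dF * S * E + F * S * dE + F * S * E * G - G * (F * S * E) = F * (S * Ω - Ω * S) * E := by
  subst hdF hdE
  simp only [Matrix.mul_sub, Matrix.sub_mul, Matrix.mul_assoc]
  abel

end FrameAlgebra

section EntrywiseDerivative

variable {𝕜 V 𝔸 l m n : Type*} [NontriviallyNormedField 𝕜] [NormedAddCommGroup V]
  [NormedSpace 𝕜 V] [NormedRing 𝔸] [NormedAlgebra 𝕜 𝔸]

variable (𝕜) in
/-- The derivative at `p` in the direction `v` of a matrix-valued function, taken entry by entry
so that no norm on matrices has to be chosen. -/
def fderivEntries (M : V → Matrix m n 𝔸) (p v : V) : Matrix m n 𝔸 :=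
  of fun i j => fderiv 𝕜 (fun q => M q i j) p v

theorem fderivEntries_eq_zero_of_eventually_eq_const {M : V → Matrix m n 𝔸} {C : Matrix m n 𝔸}
    {p : V} (h : ∀ᶠ q in 𝓝 p, M q = C) (v : V) : fderivEntries 𝕜 M p v = 0 := by
  ext i j
  have hij : (fun q => M q i j) =ᶠ[𝓝 p] fun _ => C i j := h.mono fun _ hq => congr_fun₂ hq i j
  simp [fderivEntries, hij.fderiv_eq]

variable [Fintype m] {M : V → Matrix l m 𝔸} {N : V → Matrix m n 𝔸} {p : V}

theorem differentiableAt_mul_entry (hM : ∀ i j, DifferentiableAt 𝕜 (fun q => M q i j) p)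
    (hN : ∀ i j, DifferentiableAt 𝕜 (fun q => N q i j) p) (i : l) (k : n) :
    DifferentiableAt 𝕜 (fun q => (M q * N q) i k) p := by
  simp only [Matrix.mul_apply]
  exact .fun_sum fun j _ => (hM i j).mul (hN j k)

theorem fderivEntries_mul (hM : ∀ i j, DifferentiableAt 𝕜 (fun q => M q i j) p)
    (hN : ∀ i j, DifferentiableAt 𝕜 (fun q => N q i j) p) (v : V) :
    fderivEntries 𝕜 (fun q => M q * N q) p v =
      fderivEntries 𝕜 M p v * N p + M p * fderivEntries 𝕜 N p v := by
  ext i k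
  simp only [fderivEntries, of_apply, Matrix.add_apply, Matrix.mul_apply]
  have hsum : HasFDerivAt (fun q => ∑ j, M q i j * N q j k) _ p :=
    .fun_sum fun j _ => (hM i j).hasFDerivAt.mul' (hN j k).hasFDerivAt
  rw [hsum.fderiv]
  simp [Finset.sum_add_distrib, add_comm]

theorem fderivEntries_mul_const_mul [Fintype l] {F : V → Matrix n m 𝔸} {E : V → Matrix l n 𝔸}
    (S : Matrix m l 𝔸) (hF : ∀ i j, DifferentiableAt 𝕜 (fun q => F q i j) p)
    (hE : ∀ i j, DifferentiableAt 𝕜 (fun q => E q i j) p) (v : V) :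
    fderivEntries 𝕜 (fun q => F q * S * E q) p v =
      fderivEntries 𝕜 F p v * S * E p + F p * S * fderivEntries 𝕜 E p v := by
  have hS : ∀ i j, DifferentiableAt 𝕜 (fun _ : V => S i j) p := fun _ _ =>
    differentiableAt_const _
  have hdS : fderivEntries 𝕜 (fun _ : V => S) p v = 0 :=
    fderivEntries_eq_zero_of_eventually_eq_const (.of_forall fun _ => rfl) v
  rw [fderivEntries_mul (differentiableAt_mul_entry hF hS) hE, fderivEntries_mul hF hS, hdS,
    Matrix.mul_zero, add_zero]

theorem covariant_fderivEntries_mul_const_mul_eq_zero [Fintype n] [DecidableEq m] [DecidableEq n]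
    {F : V → Matrix n m 𝔸} {E : V → Matrix m n 𝔸} {S Ω : Matrix m m 𝔸} {G : Matrix n n 𝔸} {v : V}
    (hF : ∀ i j, DifferentiableAt 𝕜 (fun q => F q i j) p)
    (hE : ∀ i j, DifferentiableAt 𝕜 (fun q => E q i j) p)
    (hFE : ∀ᶠ q in 𝓝 p, F q * E q = 1) (hEF : E p * F p = 1) (hSΩ : Commute S Ω)
    (hdE : fderivEntries 𝕜 E p v = Ω * E p - E p * G) :
    fderivEntries 𝕜 (fun q => F q * S * E q) p v + F p * S * E p * G - G * (F p * S * E p) = 0 := by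
  have hLeibniz : fderivEntries 𝕜 F p v * E p + F p * fderivEntries 𝕜 E p v = 0 := by
    rw [← fderivEntries_mul hF hE, fderivEntries_eq_zero_of_eventually_eq_const hFE]
  have hdF : fderivEntries 𝕜 F p v = G * F p - F p * Ω :=
    coframe_deriv_eq hFE.self_of_nhds hEF hLeibniz hdE
  rw [fderivEntries_mul_const_mul S hF hE, covariant_deriv_mul_mul_eq S hdF hdE, hSΩ.eq, sub_self,
    Matrix.mul_zero, Matrix.zero_mul]

end EntrywiseDerivative

section StructureMatrix

variable {R ι κ α : Type*}

/-- The coframe array `f_X^{iA}` as a matrix with row index `X` and column index `(i, A)`. -/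
def coframeMatrix (f : ι → κ → α → R) : Matrix ι (κ × α) R :=
  of fun X k => f X k.1 k.2

/-- The frame array `f^X_{iA}` as a matrix with row index `(i, A)` and column index `X`. -/
def frameMatrix (e : ι → κ → α → R) : Matrix (κ × α) ι R :=
  (coframeMatrix e)ᵀ

theorem coframeMatrix_apply (f : ι → κ → α → R) (X : ι) (k : κ × α) :
    coframeMatrix f X k = f X k.1 k.2 :=
  rfl

theorem frameMatrix_apply (e : ι → κ → α → R) (k : κ × α) (X : ι) :
    frameMatrix e k X = e X k.1 k.2 :=
  rfl

/-- The matrix `Σ_{i,j,A} σ_i^j f_X^{iA} e^Y_{jA}` attached to a matrix `σ` acting on the first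
frame index; `J^a` is the case `σ = -i σ^a`. -/
def structureMatrix [CommSemiring R] [Fintype κ] [Fintype α] [DecidableEq α] (σ : Matrix κ κ R)
    (f e : ι → κ → α → R) : Matrix ι ι R :=
  coframeMatrix f * (σ ⊗ₖ (1 : Matrix α α R)) * frameMatrix e

theorem commute_kronecker_one_one_kronecker [CommSemiring R] [Fintype κ] [Fintype α] [DecidableEq κ]
    [DecidableEq α] (σ : Matrix κ κ R) (ω : Matrix α α R) :
    Commute (σ ⊗ₖ (1 : Matrix α α R)) ((1 : Matrix κ κ R) ⊗ₖ ω) := by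
  simp [Commute, SemiconjBy, ← mul_kronecker_mul]

theorem kronecker_one_mul_frameMatrix_apply [NonAssocSemiring R] [Fintype κ] [Fintype α]
    [DecidableEq α] (σ : Matrix κ κ R) (e : ι → κ → α → R) (i : κ) (A : α) (X : ι) :
    ((σ ⊗ₖ (1 : Matrix α α R)) * frameMatrix e) (i, A) X = ∑ j, σ i j * e X j A := by
  simp [Matrix.mul_apply, Fintype.sum_prod_type, frameMatrix_apply, Matrix.one_apply]

theorem one_kronecker_mul_frameMatrix_apply [NonAssocSemiring R] [Fintype κ] [Fintype α]
    [DecidableEq κ] (ω : Matrix α α R) (e : ι → κ → α → R) (i : κ) (A : α) (X : ι) :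
    (((1 : Matrix κ κ R) ⊗ₖ ω) * frameMatrix e) (i, A) X = ∑ B, ω A B * e X i B := by
  simp [Matrix.mul_apply, Fintype.sum_prod_type_right, frameMatrix_apply, Matrix.one_apply]

theorem structureMatrix_apply [CommSemiring R] [Fintype κ] [Fintype α] [DecidableEq α]
    (σ : Matrix κ κ R) (f e : ι → κ → α → R) (X Y : ι) :
    structureMatrix σ f e X Y = ∑ i, ∑ j, ∑ A, σ i j * f X i A * e Y j A := by
  rw [structureMatrix, Matrix.mul_assoc, Matrix.mul_apply, Fintype.sum_prod_type]
  simp only [kronecker_one_mul_frameMatrix_apply, coframeMatrix_apply, Finset.mul_sum,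
    mul_left_comm (f X _ _), mul_assoc]
  exact Finset.sum_congr rfl fun i _ => Finset.sum_comm

theorem JmatF_eq_structureMatrix {r : ℕ} (f fUp : Fin (4 * r) → Fin 2 → Fin (2 * r) → ℂ)
    (a : Fin 3) (X Y : Fin (4 * r)) :
    JmatF f fUp a X Y = structureMatrix (-Complex.I • pauli a) f fUp X Y := by
  simp only [JmatF, structureMatrix_apply, Finset.mul_sum, Matrix.smul_apply, smul_eq_mul,
    mul_assoc]

variable {r : ℕ} {rho rhoLow : Fin (2 * r) → Fin (2 * r) → ℂ}
  {f fUp : Fin (4 * r) → Fin 2 → Fin (2 * r) → ℂ}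

theorem IsVielbein.coframeMatrix_mul_frameMatrix (h : IsVielbein rho rhoLow f fUp) :
    coframeMatrix f * frameMatrix fUp = 1 := by
  obtain ⟨-, -, -, hinv, -⟩ := h
  ext X Y
  simpa only [Matrix.mul_apply, Fintype.sum_prod_type, Matrix.one_apply, coframeMatrix_apply,
    frameMatrix_apply] using hinv X Y

theorem IsVielbein.frameMatrix_mul_coframeMatrix (h : IsVielbein rho rhoLow f fUp) :
    frameMatrix fUp * coframeMatrix f = 1 := by
  obtain ⟨-, -, -, -, hinv, -⟩ := h
  ext ⟨j, B⟩ ⟨i, A⟩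
  simp only [Matrix.mul_apply, coframeMatrix_apply, frameMatrix_apply, mul_comm (fUp _ _ _),
    hinv i A j B, Matrix.one_apply, Prod.mk.injEq, ite_and, ite_mul, one_mul, zero_mul,
    eq_comm (a := j), eq_comm (a := B)]

end StructureMatrix

theorem stmt3_general {𝕜 V 𝔸 ι κ α : Type*} [NontriviallyNormedField 𝕜] [NormedAddCommGroup V]
    [NormedSpace 𝕜 V] [NormedCommRing 𝔸] [NormedAlgebra 𝕜 𝔸] [Fintype ι] [Fintype κ] [Fintype α]
    [DecidableEq ι] [DecidableEq κ] [DecidableEq α] {f e : V → ι → κ → α → 𝔸} {p v : V}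
    {Γ : Matrix ι ι 𝔸} {ω : Matrix α α 𝔸}
    (hf : ∀ X i A, DifferentiableAt 𝕜 (fun q => f q X i A) p)
    (he : ∀ X i A, DifferentiableAt 𝕜 (fun q => e q X i A) p)
    (hfe : ∀ᶠ q in 𝓝 p, coframeMatrix (f q) * frameMatrix (e q) = 1)
    (hef : frameMatrix (e p) * coframeMatrix (f p) = 1)
    (heq : ∀ X i A, fderiv 𝕜 (fun q => e q X i A) p v - (∑ B, ω A B * e p X i B)
      + (∑ Z, e p Z i A * Γ Z X) = 0) (σ : Matrix κ κ 𝔸) (X Z : ι) :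
    fderiv 𝕜 (fun q => structureMatrix σ (f q) (e q) X Z) p v
      + (∑ W, Γ W Z * structureMatrix σ (f p) (e p) X W)
      - (∑ W, Γ X W * structureMatrix σ (f p) (e p) W Z) = 0 := by
  have hde : fderivEntries 𝕜 (fun q => frameMatrix (e q)) p v =
      ((1 : Matrix κ κ 𝔸) ⊗ₖ ω) * frameMatrix (e p) - frameMatrix (e p) * Γ := by
    ext ⟨i, A⟩ X
    rw [Matrix.sub_apply, one_kronecker_mul_frameMatrix_apply, Matrix.mul_apply]
    simp only [fderivEntries, of_apply, frameMatrix_apply]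
    linear_combination heq X i A
  have hmatrix := covariant_fderivEntries_mul_const_mul_eq_zero
    (F := fun q => coframeMatrix (f q)) (E := fun q => frameMatrix (e q))
    (fun X k => hf X k.1 k.2) (fun k X => he X k.1 k.2) hfe hef
    (commute_kronecker_one_one_kronecker σ ω) hde
  simp_rw [mul_comm (Γ _ Z)]
  exact congr_fun₂ hmatrix X Z

/-- if a smooth field of vielbeins on an open set `U ⊆ ℝ^{4r}` is covariantly
constant with respect to connection coefficients `Γ` and a `GL(r,ℍ)`-connection `ω̂`, then
the structure matrices are covariantly constant with respect to `Γ`. -/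
theorem stmt3 {r : ℕ} (hr : 1 ≤ r)
    (U : Set (Fin (4*r) → ℝ)) (hU : IsOpen U)
    (rho rhoLow : Fin (2*r) → Fin (2*r) → ℂ)
    (f fUp : (Fin (4*r) → ℝ) → Fin (4*r) → Fin 2 → Fin (2*r) → ℂ)
    (hf : ∀ X i A, ContDiffOn ℝ (⊤ : ℕ∞) (fun p => f p X i A) U)
    (hfUp : ∀ X i A, ContDiffOn ℝ (⊤ : ℕ∞) (fun p => fUp p X i A) U)
    (hviel : ∀ p ∈ U, IsVielbein rho rhoLow (f p) (fUp p))
    (Γ : (Fin (4*r) → ℝ) → Fin (4*r) → Fin (4*r) → Fin (4*r) → ℝ)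
    (ωhat : (Fin (4*r) → ℝ) → Fin (4*r) → Fin (2*r) → Fin (2*r) → ℂ)
    (hΓ : ∀ Y Z X, ContDiffOn ℝ (⊤ : ℕ∞) (fun p => Γ p Y Z X) U)
    (hωhat : ∀ Y A B, ContDiffOn ℝ (⊤ : ℕ∞) (fun p => ωhat p Y A B) U)
    (heq : ∀ p ∈ U, ∀ (Y X : Fin (4*r)) (i : Fin 2) (A : Fin (2*r)),
      fderiv ℝ (fun q => fUp q X i A) p (Pi.single Y 1)
        - (∑ B, ωhat p Y A B * fUp p X i B)
        + (∑ Z, fUp p Z i A * (Γ p Y Z X : ℂ)) = 0) :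
    ∀ p ∈ U, ∀ (a : Fin 3) (Y X Z : Fin (4*r)),
      fderiv ℝ (fun q => JmatF (f q) (fUp q) a X Z) p (Pi.single Y 1)
        + (∑ W, (Γ p Y W Z : ℂ) * JmatF (f p) (fUp p) a X W)
        - (∑ W, (Γ p Y X W : ℂ) * JmatF (f p) (fUp p) a W Z) = 0 := by
  intro p hp a Y X Z
  have hU_nhds := hU.mem_nhds hp
  simp only [JmatF_eq_structureMatrix]
  exact stmt3_general (ω := ωhat p Y) (Γ := fun W T => (Γ p Y W T : ℂ))
    (fun X i A => ((hf X i A).contDiffAt hU_nhds).differentiableAt (by simp))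
    (fun X i A => ((hfUp X i A).contDiffAt hU_nhds).differentiableAt (by simp))
    (mem_of_superset hU_nhds fun q hq => (hviel q hq).coframeMatrix_mul_frameMatrix)
    (hviel p hp).frameMatrix_mul_coframeMatrix (heq p hp Y) (-Complex.I • pauli a) X Z
end
end

section
/- Let U ⊆ ℝ^{4r} be open, let f^X_{iA}, f_X^{iA} be a smooth field of vielbeins on U, and suppose smooth functions Γ_{XY}{}^Z, ω_{Xj}{}^i (2×2 valued) and ω̂_{XB}{}^A (2r×2r valued) on U satisfy ∂_X f_Y^{iA} - Σ_Z Γ_{XY}{}^Z f_Z^{iA} + Σ_j f_Y^{jA} ω_{Xj}{}^i + Σ_B f_Y^{iB} ω̂_{XB}{}^A = 0 for all indices. Define the curvatures R_{XYW}{}^Z = ∂_X Γ_{YW}{}^Z - ∂_Y Γ_{XW}{}^Z + Σ_V (Γ_{XV}{}^Z Γ_{YW}{}^V - Γ_{YV}{}^Z Γ_{XW}{}^V), 𝓡_{XYj}{}^i = ∂_X ω_{Yj}{}^i - ∂_Y ω_{Xj}{}^i + Σ_k (ω_{Xk}{}^i ω_{Yj}{}^k - ω_{Yk}{}^i ω_{Xj}{}^k),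 and 𝓡̂_{XYB}{}^A = ∂_X ω̂_{YB}{}^A - ∂_Y ω̂_{XB}{}^A + Σ_C (ω̂_{XC}{}^A ω̂_{YB}{}^C - ω̂_{YC}{}^A ω̂_{XB}{}^C). Then on U the curvature of Γ decomposes through the vielbein as R_{XYW}{}^Z = Σ_{i,j,A} f^Z_{iA} 𝓡_{XYj}{}^i f_W^{jA} + Σ_{i,A,B} f^Z_{iA} 𝓡̂_{XYB}{}^A f_W^{iB} for all X, Y, W, Z. -/
noncomputable section

/-- A vielbein (for this statement): mutually inverse complex arrays. -/
def IsVielbeinInv {r : ℕ} (f fUp : Fin (4*r) → Fin 2 → Fin (2*r) → ℂ) : Prop :=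
  (∀ X Y, (∑ i, ∑ A, f X i A * fUp Y i A) = if X = Y then 1 else 0) ∧
  (∀ i A j B, (∑ X, f X i A * fUp X j B)
      = (if i = j then 1 else 0) * (if A = B then 1 else 0))

/-- Curvature `R_{XYW}{}^Z` of the affine connection `Γ`. -/
def curvGamma {n : ℕ} (Γ : (Fin n → ℝ) → Fin n → Fin n → Fin n → ℝ)
    (p : Fin n → ℝ) (X Y W Z : Fin n) : ℝ :=
  fderiv ℝ (fun q => Γ q Y W Z) p (Pi.single X 1)
    - fderiv ℝ (fun q => Γ q X W Z) p (Pi.single Y 1)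
    + ∑ V, (Γ p X V Z * Γ p Y W V - Γ p Y V Z * Γ p X W V)

/-- Curvature `𝓡_{XY j}{}^i` of a matrix-valued connection `ω_{X j}{}^i`. -/
def curvConn {n : ℕ} {ι : Type*} [Fintype ι]
    (ω : (Fin n → ℝ) → Fin n → ι → ι → ℂ) (p : Fin n → ℝ) (X Y : Fin n) (j i : ι) : ℂ :=
  fderiv ℝ (fun q => ω q Y j i) p (Pi.single X 1)
    - fderiv ℝ (fun q => ω q X j i) p (Pi.single Y 1)
    + ∑ k, (ω p X k i * ω p Y j k - ω p Y k i * ω p X j k)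

/-!
Collect the vielbein at a point into a matrix `F` with rows indexed by `X` and columns by the pairs
`(i, A)`. Covariant constancy says `∂_X F = Γ_X F - F Ω_X`, where `Ω = ω ⊗ 1 + 1 ⊗ ω̂`. When the
mixed partial derivatives of `F` are expanded with this equation, the terms `Γ_Y F Ω_X + Γ_X F Ω_Y`
are symmetric in `X` and `Y`, so the symmetry of second derivatives leaves `R_{XY} F = F K_{XY}`
with `K` the curvature of `Ω`. The two summands of `Ω` commute, so `K = 𝓡 ⊗ 1 + 1 ⊗ 𝓡̂`, and
multiplying by the inverse vielbein on the right isolates `R_{XY}`. Since `∂F` is a polynomial in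
`F`, `Γ`, `Ω`, it is differentiable along with them, so second derivatives of `F` exist and are
symmetric.
-/

open Filter Topology
open scoped Kronecker

section SecondDerivative

variable {τ E : Type*} [DecidableEq τ] [NormedAddCommGroup E] [NormedSpace ℝ E]
  {g : (τ → ℝ) → E} {p : τ → ℝ}

lemma continuousLinearMap_eq_sum_proj_smulRight [Fintype τ] (L : (τ → ℝ) →L[ℝ] E) :
    L = ∑ i, (ContinuousLinearMap.proj (R := ℝ) (φ := fun _ : τ => ℝ) i).smulRight
      (L (Pi.single i 1)) := by
  ext v
  conv_lhs => rw [← Finset.univ_sum_single v]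
  simp [← map_smul, ← Pi.single_smul]

lemma differentiableAt_fderiv_of_partial [Finite τ]
    (hg : ∀ i, DifferentiableAt ℝ (fun q => fderiv ℝ g q (Pi.single i 1)) p) :
    DifferentiableAt ℝ (fderiv ℝ g) p := by
  cases nonempty_fintype τ
  rw [funext fun q => continuousLinearMap_eq_sum_proj_smulRight (fderiv ℝ g q)]
  exact DifferentiableAt.fun_sum fun i _ =>
    (ContinuousLinearMap.smulRightL ℝ (τ → ℝ) E
      (ContinuousLinearMap.proj i)).differentiableAt.comp p (hg i)

lemma fderiv_partial_comm [Finite τ] (hg : ∀ᶠ q in 𝓝 p, DifferentiableAt ℝ g q)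
    (hg' : ∀ i, DifferentiableAt ℝ (fun q => fderiv ℝ g q (Pi.single i 1)) p) (i j : τ) :
    fderiv ℝ (fun q => fderiv ℝ g q (Pi.single j 1)) p (Pi.single i 1) =
      fderiv ℝ (fun q => fderiv ℝ g q (Pi.single i 1)) p (Pi.single j 1) := by
  cases nonempty_fintype τ
  have hd := differentiableAt_fderiv_of_partial hg'
  have hsecond (k l : τ) : fderiv ℝ (fun q => fderiv ℝ g q (Pi.single l 1)) p (Pi.single k 1) =
      fderiv ℝ (fderiv ℝ g) p (Pi.single k 1) (Pi.single l 1) := by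
    simp [fderiv_clm_apply hd (differentiableAt_const _)]
  rw [hsecond, hsecond]
  exact second_derivative_symmetric_of_eventually (hg.mono fun q hq => hq.hasFDerivAt)
    hd.hasFDerivAt _ _

end SecondDerivative

section KroneckerSum

variable {ι κ m R : Type*} [DecidableEq ι] [DecidableEq κ] [CommRing R]

/-- The Kronecker sum `A ⊗ 1 + 1 ⊗ B`, the action on a tensor product of a pair of infinitesimal
transformations of its factors. -/
def kroneckerSum (A : Matrix ι ι R) (B : Matrix κ κ R) : Matrix (ι × κ) (ι × κ) R :=
  A ⊗ₖ 1 + 1 ⊗ₖ B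

lemma kroneckerSum_add (A A' : Matrix ι ι R) (B B' : Matrix κ κ R) :
    kroneckerSum (A + A') (B + B') = kroneckerSum A B + kroneckerSum A' B' := by
  simp only [kroneckerSum, Matrix.add_kronecker, Matrix.kronecker_add]
  abel

lemma kroneckerSum_sub (A A' : Matrix ι ι R) (B B' : Matrix κ κ R) :
    kroneckerSum (A - A') (B - B') = kroneckerSum A B - kroneckerSum A' B' := by
  rw [eq_sub_iff_add_eq, ← kroneckerSum_add, sub_add_cancel, sub_add_cancel]

variable [Fintype ι] [Fintype κ]

lemma kroneckerSum_lie (A A' : Matrix ι ι R) (B B' : Matrix κ κ R) :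
    kroneckerSum ⁅A, A'⁆ ⁅B, B'⁆ = ⁅kroneckerSum A B, kroneckerSum A' B'⁆ := by
  simp only [Ring.lie_def, kroneckerSum_sub]
  simp only [kroneckerSum, mul_add, add_mul, ← Matrix.mul_kronecker_mul, mul_one, one_mul]
  abel

lemma mul_kroneckerSum_apply (M : Matrix m (ι × κ) R) (A : Matrix ι ι R) (B : Matrix κ κ R)
    (a : m) (i : ι) (b : κ) :
    (M * kroneckerSum A B) a (i, b) = ∑ j, M a (j, b) * A j i + ∑ c, M a (i, c) * B c b := by
  rw [kroneckerSum, Matrix.mul_add, Matrix.add_apply]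
  simp [Matrix.mul_apply, Fintype.sum_prod_type, Matrix.one_apply]

end KroneckerSum

section MatrixFDeriv

variable {E R S l m n : Type*} [NormedAddCommGroup E] [NormedSpace ℝ E]
  [NormedCommRing R] [NormedAlgebra ℝ R] {p : E}

/-- The derivative of a matrix-valued function at `p` in the direction `v`. It is taken entry by
entry, since matrices carry no canonical norm. -/
def matrixFDeriv (M : E → Matrix m n R) (p v : E) : Matrix m n R :=
  Matrix.of fun a b => fderiv ℝ (fun q => M q a b) p v

lemma matrixFDeriv_congr {M N : E → Matrix m n R} (h : M =ᶠ[𝓝 p] N) (v : E) :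
    matrixFDeriv M p v = matrixFDeriv N p v := by
  ext a b
  have hab : (fun q => M q a b) =ᶠ[𝓝 p] fun q => N q a b := h.mono fun q hq => by simp only [hq]
  simp only [matrixFDeriv, Matrix.of_apply, hab.fderiv_eq]

lemma matrixFDeriv_sub {M N : E → Matrix m n R}
    (hM : ∀ a b, DifferentiableAt ℝ (fun q => M q a b) p)
    (hN : ∀ a b, DifferentiableAt ℝ (fun q => N q a b) p) (v : E) :
    matrixFDeriv (fun q => M q - N q) p v = matrixFDeriv M p v - matrixFDeriv N p v := by
  ext a b
  simp [matrixFDeriv, fderiv_fun_sub (hM a b) (hN a b)]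

lemma differentiableAt_matrix_mul_apply [Fintype m] {M : E → Matrix l m R} {N : E → Matrix m n R}
    (hM : ∀ a b, DifferentiableAt ℝ (fun q => M q a b) p)
    (hN : ∀ a b, DifferentiableAt ℝ (fun q => N q a b) p) (a : l) (b : n) :
    DifferentiableAt ℝ (fun q => (M q * N q) a b) p := by
  simp only [Matrix.mul_apply]
  exact DifferentiableAt.fun_sum fun c _ => (hM a c).fun_mul (hN c b)

lemma matrixFDeriv_mul [Fintype m] {M : E → Matrix l m R} {N : E → Matrix m n R}
    (hM : ∀ a b, DifferentiableAt ℝ (fun q => M q a b) p)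
    (hN : ∀ a b, DifferentiableAt ℝ (fun q => N q a b) p) (v : E) :
    matrixFDeriv (fun q => M q * N q) p v =
      matrixFDeriv M p v * N p + M p * matrixFDeriv N p v := by
  ext a b
  have hsum := fderiv_fun_sum (u := Finset.univ) fun c _ => (hM a c).fun_mul (hN c b)
  simp only [matrixFDeriv, Matrix.mul_apply, Matrix.add_apply, Matrix.of_apply, hsum,
    sum_apply, ← Finset.sum_add_distrib]
  refine Finset.sum_congr rfl fun c _ => ?_
  simp only [fderiv_fun_mul (hM a c) (hN c b), add_apply, smul_apply, smul_eq_mul]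
  ring

lemma matrixFDeriv_map [NormedCommRing S] [NormedAlgebra ℝ S] (φ : R →L[ℝ] S)
    {M : E → Matrix m n R} (hM : ∀ a b, DifferentiableAt ℝ (fun q => M q a b) p) (v : E) :
    matrixFDeriv (fun q => (M q).map φ) p v = (matrixFDeriv M p v).map φ := by
  ext a b
  exact DFunLike.congr_fun (φ.hasFDerivAt.comp p (hM a b).hasFDerivAt).fderiv v

variable {ι κ : Type*} [DecidableEq ι] [DecidableEq κ] {A : E → Matrix ι ι R} {B : E → Matrix κ κ R}

lemma differentiableAt_kroneckerSum_apply (hA : ∀ i j, DifferentiableAt ℝ (fun q => A q i j) p)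
    (hB : ∀ i j, DifferentiableAt ℝ (fun q => B q i j) p) (a b : ι × κ) :
    DifferentiableAt ℝ (fun q => kroneckerSum (A q) (B q) a b) p :=
  ((hA a.1 b.1).mul_const _).fun_add ((hB a.2 b.2).const_mul _)

lemma matrixFDeriv_kroneckerSum (hA : ∀ i j, DifferentiableAt ℝ (fun q => A q i j) p)
    (hB : ∀ i j, DifferentiableAt ℝ (fun q => B q i j) p) (v : E) :
    matrixFDeriv (fun q => kroneckerSum (A q) (B q)) p v =
      kroneckerSum (matrixFDeriv A p v) (matrixFDeriv B p v) := by
  ext a b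
  have hadd := fderiv_fun_add ((hA a.1 b.1).mul_const ((1 : Matrix κ κ R) a.2 b.2))
    ((hB a.2 b.2).const_mul ((1 : Matrix ι ι R) a.1 b.1))
  simp only [matrixFDeriv, kroneckerSum, Matrix.add_apply, Matrix.kroneckerMap_apply,
    Matrix.of_apply, hadd, fderiv_mul_const (hA a.1 b.1), fderiv_const_mul (hB a.2 b.2), add_apply,
    smul_apply, smul_eq_mul]
  ring

end MatrixFDeriv

section MatrixCurvature

variable {d : ℕ} {R m n ι κ : Type*} [NormedCommRing R] [NormedAlgebra ℝ R] {p : Fin d → ℝ}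

/-- The partial derivative `∂_X M` of a matrix-valued function on `ℝ^d`. -/
def matrixPartial (X : Fin d) (M : (Fin d → ℝ) → Matrix m n R) (p : Fin d → ℝ) : Matrix m n R :=
  matrixFDeriv M p (Pi.single X 1)

lemma matrixPartial_comm {M : (Fin d → ℝ) → Matrix m n R}
    (hM : ∀ᶠ q in 𝓝 p, ∀ a b, DifferentiableAt ℝ (fun q => M q a b) q)
    (hM' : ∀ X a b, DifferentiableAt ℝ (fun q => matrixPartial X M q a b) p) (X Y : Fin d) :
    matrixPartial X (matrixPartial Y M) p = matrixPartial Y (matrixPartial X M) p := by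
  ext a b
  exact fderiv_partial_comm (hM.mono fun q hq => hq a b) (fun Z => hM' Z a b) X Y

variable [Fintype m] [Fintype n] [Fintype ι] [Fintype κ]

/-- The curvature `K_{XY} = ∂_X A_Y - ∂_Y A_X + [A_Y, A_X]` of a matrix-valued connection `A`. Rows
are lower indices and columns upper ones, `(A_X)_{ji} = A_{Xj}{}^i`, so matrices compose in the
order opposite to endomorphisms; this is why the commutator is not `[A_X, A_Y]`. -/
def matrixCurvature (A : (Fin d → ℝ) → Fin d → Matrix m m R) (p : Fin d → ℝ) (X Y : Fin d) :
    Matrix m m R :=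
  matrixPartial X (fun q => A q Y) p - matrixPartial Y (fun q => A q X) p + ⁅A p Y, A p X⁆

lemma matrixCurvature_map_algebraMap {A : (Fin d → ℝ) → Fin d → Matrix m m ℝ}
    (hA : ∀ X a b, DifferentiableAt ℝ (fun q => A q X a b) p) (X Y : Fin d) :
    matrixCurvature (fun q X => (A q X).map (algebraMap ℝ R)) p X Y =
      (matrixCurvature A p X Y).map (algebraMap ℝ R) := by
  have hpartial (X Y : Fin d) : matrixPartial X (fun q => (A q Y).map (algebraMap ℝ R)) p =
      (matrixPartial X (fun q => A q Y) p).map (algebraMap ℝ R) :=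
    matrixFDeriv_map (algebraMapCLM ℝ R) (hA Y) _
  ext a b
  simp [matrixCurvature, hpartial, Ring.lie_def, ← Matrix.map_mul]

lemma matrixCurvature_kroneckerSum [DecidableEq ι] [DecidableEq κ]
    {A : (Fin d → ℝ) → Fin d → Matrix ι ι R} {B : (Fin d → ℝ) → Fin d → Matrix κ κ R}
    (hA : ∀ X a b, DifferentiableAt ℝ (fun q => A q X a b) p)
    (hB : ∀ X a b, DifferentiableAt ℝ (fun q => B q X a b) p) (X Y : Fin d) :
    matrixCurvature (fun q X => kroneckerSum (A q X) (B q X)) p X Y =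
      kroneckerSum (matrixCurvature A p X Y) (matrixCurvature B p X Y) := by
  have hpartial (X Y : Fin d) : matrixPartial X (fun q => kroneckerSum (A q Y) (B q Y)) p =
      kroneckerSum (matrixPartial X (fun q => A q Y) p) (matrixPartial X (fun q => B q Y) p) :=
    matrixFDeriv_kroneckerSum (hA Y) (hB Y) _
  simp only [matrixCurvature, hpartial, kroneckerSum_add, kroneckerSum_sub, kroneckerSum_lie]

variable {F : (Fin d → ℝ) → Matrix m n R} {G : (Fin d → ℝ) → Fin d → Matrix m m R}
  {Ω : (Fin d → ℝ) → Fin d → Matrix n n R}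

lemma matrixPartial_matrixPartial_of_parallel
    (hF : ∀ a b, DifferentiableAt ℝ (fun q => F q a b) p)
    (hG : ∀ X a b, DifferentiableAt ℝ (fun q => G q X a b) p)
    (hΩ : ∀ X a b, DifferentiableAt ℝ (fun q => Ω q X a b) p)
    (hpar : ∀ᶠ q in 𝓝 p, ∀ X, matrixPartial X F q = G q X * F q - F q * Ω q X) (X Y : Fin d) :
    matrixPartial X (matrixPartial Y F) p =
      matrixPartial X (fun q => G q Y) p * F p + G p Y * (G p X * F p - F p * Ω p X) -
        ((G p X * F p - F p * Ω p X) * Ω p Y + F p * matrixPartial X (fun q => Ω q Y) p) := by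
  unfold matrixPartial at hpar ⊢
  rw [matrixFDeriv_congr (hpar.mono fun q hq => hq Y),
    matrixFDeriv_sub (differentiableAt_matrix_mul_apply (hG Y) hF)
      (differentiableAt_matrix_mul_apply hF (hΩ Y)),
    matrixFDeriv_mul (hG Y) hF, matrixFDeriv_mul hF (hΩ Y), hpar.self_of_nhds X]

theorem matrixCurvature_mul_eq_mul_matrixCurvature_of_parallel
    (hF : ∀ᶠ q in 𝓝 p, ∀ a b, DifferentiableAt ℝ (fun q => F q a b) q)
    (hG : ∀ X a b, DifferentiableAt ℝ (fun q => G q X a b) p)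
    (hΩ : ∀ X a b, DifferentiableAt ℝ (fun q => Ω q X a b) p)
    (hpar : ∀ᶠ q in 𝓝 p, ∀ X, matrixPartial X F q = G q X * F q - F q * Ω q X) (X Y : Fin d) :
    matrixCurvature G p X Y * F p = F p * matrixCurvature Ω p X Y := by
  have hFp := hF.self_of_nhds
  have hF' (Z : Fin d) (a : m) (b : n) :
      DifferentiableAt ℝ (fun q => matrixPartial Z F q a b) p :=
    ((differentiableAt_matrix_mul_apply (hG Z) hFp a b).sub
      (differentiableAt_matrix_mul_apply hFp (hΩ Z) a b)).congr_of_eventuallyEq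
        (hpar.mono fun q hq => by simp only [hq Z]; rfl)
  have hsymm := matrixPartial_comm hF hF' X Y
  rw [matrixPartial_matrixPartial_of_parallel hFp hG hΩ hpar,
    matrixPartial_matrixPartial_of_parallel hFp hG hΩ hpar, ← sub_eq_zero] at hsymm
  rw [← sub_eq_zero, ← hsymm]
  simp only [matrixCurvature, Ring.lie_def, Matrix.mul_sub, Matrix.sub_mul, Matrix.mul_add,
    Matrix.add_mul, Matrix.mul_assoc]
  abel

end MatrixCurvature

section Components

variable {d : ℕ} {ι κ : Type*} [Fintype ι] [Fintype κ] {p : Fin d → ℝ}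

lemma curvConn_eq_matrixCurvature (ω : (Fin d → ℝ) → Fin d → ι → ι → ℂ) (X Y : Fin d) :
    Matrix.of (curvConn ω p X Y) = matrixCurvature (fun q X => Matrix.of (ω q X)) p X Y := by
  ext j i
  simp [curvConn, matrixCurvature, matrixPartial, matrixFDeriv, Ring.lie_def, Matrix.mul_apply,
    mul_comm]

lemma ofReal_curvGamma_eq_matrixCurvature {Γ : (Fin d → ℝ) → Fin d → Fin d → Fin d → ℝ}
    (hΓ : ∀ X Y Z, DifferentiableAt ℝ (fun q => Γ q X Y Z) p) (X Y W Z : Fin d) :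
    (curvGamma Γ p X Y W Z : ℂ) =
      matrixCurvature (fun q X => (Matrix.of (Γ q X)).map (algebraMap ℝ ℂ)) p X Y W Z := by
  rw [matrixCurvature_map_algebraMap (A := fun q X => Matrix.of (Γ q X)) hΓ, Matrix.map_apply,
    Complex.coe_algebraMap]
  simp [curvGamma, matrixCurvature, matrixPartial, matrixFDeriv, Ring.lie_def, Matrix.mul_apply,
    mul_comm]

/-- The array `f_X^{iA}` at a point as a matrix with rows `X` and columns `(i, A)`. -/
def vielbeinMatrix (f : Fin d → ι → κ → ℂ) : Matrix (Fin d) (ι × κ) ℂ :=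
  Matrix.of fun X a => f X a.1 a.2

lemma vielbeinMatrix_mul_transpose_eq_one {f g : Fin d → ι → κ → ℂ}
    (h : ∀ X Y, ∑ i, ∑ A, f X i A * g Y i A = if X = Y then 1 else 0) :
    vielbeinMatrix f * (vielbeinMatrix g).transpose = 1 := by
  ext X Y
  simpa [vielbeinMatrix, Matrix.mul_apply, Fintype.sum_prod_type, Matrix.one_apply] using h X Y

variable [DecidableEq ι] [DecidableEq κ]

lemma vielbeinMatrix_mul_kroneckerSum_mul_transpose_apply (f g : Fin d → ι → κ → ℂ)
    (A : Matrix ι ι ℂ) (B : Matrix κ κ ℂ) (W Z : Fin d) :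
    (vielbeinMatrix f * kroneckerSum A B * (vielbeinMatrix g).transpose) W Z =
      (∑ i, ∑ j, ∑ a, g Z i a * A j i * f W j a) + ∑ i, ∑ a, ∑ b, g Z i a * B b a * f W i b := by
  rw [Matrix.mul_apply]
  simp only [Fintype.sum_prod_type, mul_kroneckerSum_apply, add_mul, Finset.sum_add_distrib,
    Finset.sum_mul]
  congr 1
  · refine Finset.sum_congr rfl fun i _ => Finset.sum_comm.trans ?_
    exact Finset.sum_congr rfl fun j _ => Finset.sum_congr rfl fun a _ => by
      simp only [vielbeinMatrix, Matrix.of_apply, Matrix.transpose_apply]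
      ring
  · refine Finset.sum_congr rfl fun i _ => Finset.sum_congr rfl fun a _ =>
      Finset.sum_congr rfl fun b _ => ?_
    simp only [vielbeinMatrix, Matrix.of_apply, Matrix.transpose_apply]
    ring

lemma matrixPartial_vielbeinMatrix {f : (Fin d → ℝ) → Fin d → ι → κ → ℂ}
    {Γ : Fin d → Fin d → ℝ} {ω : ι → ι → ℂ} {ωhat : κ → κ → ℂ} {X : Fin d}
    (h : ∀ Y i A, fderiv ℝ (fun q => f q Y i A) p (Pi.single X 1)
      - (∑ Z, (Γ Y Z : ℂ) * f p Z i A) + (∑ j, f p Y j A * ω j i)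
      + (∑ B, f p Y i B * ωhat B A) = 0) :
    matrixPartial X (fun q => vielbeinMatrix (f q)) p =
      (Matrix.of Γ).map (algebraMap ℝ ℂ) * vielbeinMatrix (f p)
        - vielbeinMatrix (f p) * kroneckerSum (Matrix.of ω) (Matrix.of ωhat) := by
  ext Y ⟨i, A⟩
  rw [Matrix.sub_apply, mul_kroneckerSum_apply]
  simp only [matrixPartial, matrixFDeriv, vielbeinMatrix, Matrix.mul_apply, Matrix.of_apply,
    Matrix.map_apply, Complex.coe_algebraMap]
  linear_combination h Y i A

end Components

theorem stmt4_general {d : ℕ} {ι κ : Type*} [Fintype ι] [Fintype κ]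
    {U : Set (Fin d → ℝ)} (hU : IsOpen U)
    {f fUp : (Fin d → ℝ) → Fin d → ι → κ → ℂ}
    (hf : ∀ X i A, DifferentiableOn ℝ (fun p => f p X i A) U)
    (hfUp : ∀ p ∈ U, ∀ X Y, ∑ i, ∑ A, f p X i A * fUp p Y i A = if X = Y then 1 else 0)
    {Γ : (Fin d → ℝ) → Fin d → Fin d → Fin d → ℝ}
    {ω : (Fin d → ℝ) → Fin d → ι → ι → ℂ} {ωhat : (Fin d → ℝ) → Fin d → κ → κ → ℂ}
    (hΓ : ∀ X Y Z, DifferentiableOn ℝ (fun p => Γ p X Y Z) U)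
    (hω : ∀ X j i, DifferentiableOn ℝ (fun p => ω p X j i) U)
    (hωhat : ∀ X B A, DifferentiableOn ℝ (fun p => ωhat p X B A) U)
    (heq : ∀ p ∈ U, ∀ X Y i A,
      fderiv ℝ (fun q => f q Y i A) p (Pi.single X 1)
        - (∑ Z, (Γ p X Y Z : ℂ) * f p Z i A)
        + (∑ j, f p Y j A * ω p X j i)
        + (∑ B, f p Y i B * ωhat p X B A) = 0)
    {p : Fin d → ℝ} (hp : p ∈ U) (X Y W Z : Fin d) :
    (curvGamma Γ p X Y W Z : ℂ)
      = (∑ i, ∑ j, ∑ A, fUp p Z i A * curvConn ω p X Y j i * f p W j A)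
        + ∑ i, ∑ A, ∑ B, fUp p Z i A * curvConn ωhat p X Y B A * f p W i B := by
  classical
  have hpU : U ∈ 𝓝 p := hU.mem_nhds hp
  have hΓp (X Y Z) := (hΓ X Y Z).differentiableAt hpU
  have hωp (X j i) := (hω X j i).differentiableAt hpU
  have hωhatp (X B A) := (hωhat X B A).differentiableAt hpU
  let F q := vielbeinMatrix (f q)
  let G q X := (Matrix.of (Γ q X)).map (algebraMap ℝ ℂ)
  let Ω q X := kroneckerSum (Matrix.of (ω q X)) (Matrix.of (ωhat q X))
  have hintertwine : matrixCurvature G p X Y * F p = F p * matrixCurvature Ω p X Y := by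
    refine matrixCurvature_mul_eq_mul_matrixCurvature_of_parallel ?_ ?_ ?_ ?_ X Y
    · filter_upwards [hpU] with q hq X a
      exact (hf X a.1 a.2).differentiableAt (hU.mem_nhds hq)
    · exact fun X Y Z => (algebraMapCLM ℝ ℂ).differentiableAt.comp p (hΓp X Y Z)
    · exact fun X => differentiableAt_kroneckerSum_apply (hωp X) (hωhatp X)
    · filter_upwards [hpU] with q hq X
      exact matrixPartial_vielbeinMatrix (heq q hq X)
  have hinv : F p * (vielbeinMatrix (fUp p)).transpose = 1 :=
    vielbeinMatrix_mul_transpose_eq_one (hfUp p hp)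
  have hdecomp : matrixCurvature G p X Y =
      F p * matrixCurvature Ω p X Y * (vielbeinMatrix (fUp p)).transpose := by
    rw [← hintertwine, Matrix.mul_assoc, hinv, Matrix.mul_one]
  have hΩ : matrixCurvature Ω p X Y =
      kroneckerSum (Matrix.of (curvConn ω p X Y)) (Matrix.of (curvConn ωhat p X Y)) := by
    rw [curvConn_eq_matrixCurvature, curvConn_eq_matrixCurvature]
    exact matrixCurvature_kroneckerSum hωp hωhatp X Y
  rw [ofReal_curvGamma_eq_matrixCurvature hΓp, hdecomp, hΩ]
  exact vielbeinMatrix_mul_kroneckerSum_mul_transpose_apply _ _ _ _ W Z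

/-- integrability of the covariant constancy of the vielbein: the curvature
of `Γ` decomposes through the vielbein into the SU(2) curvature of `ω` and the
`GL(r,ℍ)` curvature of `ω̂`. -/
theorem stmt4 {r : ℕ} (hr : 1 ≤ r)
    (U : Set (Fin (4*r) → ℝ)) (hU : IsOpen U)
    (f fUp : (Fin (4*r) → ℝ) → Fin (4*r) → Fin 2 → Fin (2*r) → ℂ)
    (hf : ∀ X i A, ContDiffOn ℝ (⊤ : ℕ∞) (fun p => f p X i A) U)
    (hfUp : ∀ X i A, ContDiffOn ℝ (⊤ : ℕ∞) (fun p => fUp p X i A) U)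
    (hviel : ∀ p ∈ U, IsVielbeinInv (f p) (fUp p))
    (Γ : (Fin (4*r) → ℝ) → Fin (4*r) → Fin (4*r) → Fin (4*r) → ℝ)
    (ω : (Fin (4*r) → ℝ) → Fin (4*r) → Fin 2 → Fin 2 → ℂ)
    (ωhat : (Fin (4*r) → ℝ) → Fin (4*r) → Fin (2*r) → Fin (2*r) → ℂ)
    (hΓ : ∀ X Y Z, ContDiffOn ℝ (⊤ : ℕ∞) (fun p => Γ p X Y Z) U)
    (hω : ∀ X j i, ContDiffOn ℝ (⊤ : ℕ∞) (fun p => ω p X j i) U)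
    (hωhat : ∀ X A B, ContDiffOn ℝ (⊤ : ℕ∞) (fun p => ωhat p X A B) U)
    (heq : ∀ p ∈ U, ∀ (X Y : Fin (4*r)) (i : Fin 2) (A : Fin (2*r)),
      fderiv ℝ (fun q => f q Y i A) p (Pi.single X 1)
        - (∑ Z, (Γ p X Y Z : ℂ) * f p Z i A)
        + (∑ j, f p Y j A * ω p X j i)
        + (∑ B, f p Y i B * ωhat p X B A) = 0) :
    ∀ p ∈ U, ∀ X Y W Z : Fin (4*r),
      (curvGamma Γ p X Y W Z : ℂ)
        = (∑ i, ∑ j, ∑ A, fUp p Z i A * curvConn ω p X Y j i * f p W j A)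
          + ∑ i, ∑ A, ∑ B, fUp p Z i A * curvConn ωhat p X Y B A * f p W i B := by
  intro p hp X Y W Z
  exact stmt4_general hU (fun X i A => (hf X i A).differentiableOn (by simp))
    (fun p hp => (hviel p hp).1) (fun X Y Z => (hΓ X Y Z).differentiableOn (by simp))
    (fun X j i => (hω X j i).differentiableOn (by simp))
    (fun X B A => (hωhat X B A).differentiableOn (by simp)) heq hp X Y W Z
end
end

section
/- (ξ-transformations of quaternionic connections.) Let U ⊆ E be open, let (J^1,J^2,J^3) be a smooth field of quaternionic triples on U, and suppose the torsionless connection coefficients Γ together with the triplet of smooth 1-form fields ω^a satisfy the quaternionic condition. Then for every smooth 1-form field ξ : U → E^*, the connection coefficients Γ'_p(X,Y) := Γ_p(X,Y) + S^{ξ_p}(X,Y) (with S^{ξ_p} built from ξ_p and the quaternionic triple at p) are again torsionless and, together with the triplet ω'^a_p := ω^a_p - ξ_p ∘ J^a_p, satisfy the quaternionic condition. -/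
noncomputable section

/-- A quaternionic triple of continuous linear endomorphisms:
`J^a ∘ J^b = -δ^{ab} id + Σ_c ε^{abc} J^c`. -/
def IsQuatTripleCLM {E : Type*} [NormedAddCommGroup E] [NormedSpace ℝ E]
    (J : Fin 3 → E →L[ℝ] E) : Prop :=
  ∀ a b, (J a).comp (J b)
    = -(if a = b then (1 : E →L[ℝ] E) else 0) + ∑ c, eps3 a b c • J c

/-- `S^ξ(X,Y) = ξ(X)Y + ξ(Y)X - Σ_a ξ(J^a X) J^a Y - Σ_a ξ(J^a Y) J^a X`. -/
def SxiCLM {E : Type*} [NormedAddCommGroup E] [NormedSpace ℝ E]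
    (J : Fin 3 → E →L[ℝ] E) (ξ : E →L[ℝ] ℝ) (X Y : E) : E :=
  ξ X • Y + ξ Y • X - (∑ a, ξ (J a X) • J a Y) - ∑ a, ξ (J a Y) • J a X

/-!
A quaternionic triple makes `E` a left module over the quaternions, and
`Q(X) = ξ(X) - Σ_a ξ(J^a X) J^a` is the quaternion-linear form with real part `ξ`, acting on `E`.
Now `S^ξ(X, Y) = Q(X) Y + Q(Y) X`. The second summand is quaternion-linear in `Y`, so it commutes
with the `J^a`. The first is scalar multiplication by a quaternion, so its commutator with `J^a`
comes from `[J^b, J^a]` alone, which gives exactly the change of `ω`.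
-/

lemma eps3_rotate (a b c : Fin 3) : eps3 b c a = eps3 a b c := by
  simp only [eps3]
  ring

lemma eps3_swap (a b c : Fin 3) : eps3 b a c = -eps3 a b c := by
  simp only [eps3]
  ring

section

variable {E : Type*} [NormedAddCommGroup E] [NormedSpace ℝ E]

/-- For a quaternionic triple `J`, the quaternion-linear form `ξ - Σ_a (ξ ∘ J^a) J^a` with real part
`ξ`. Its values are quaternions, encoded as endomorphisms in the span of `1` and the `J^a`. -/
def quatForm (J : Fin 3 → E →L[ℝ] E) (ξ : E →L[ℝ] ℝ) : E →L[ℝ] E →L[ℝ] E :=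
  ξ.smulRight 1 - ∑ a, (ξ.comp (J a)).smulRight (J a)

lemma quatForm_apply (J : Fin 3 → E →L[ℝ] E) (ξ : E →L[ℝ] ℝ) (X : E) :
    quatForm J ξ X = ξ X • 1 - ∑ a, ξ (J a X) • J a := by
  simp [quatForm]

/-- The tensor `S^ξ` as a bundled continuous bilinear map, so that it can be added to connection
coefficients. It is defined as the symmetrization of `quatForm`. -/
def SxiBilin (J : Fin 3 → E →L[ℝ] E) (ξ : E →L[ℝ] ℝ) : E →L[ℝ] E →L[ℝ] E :=
  quatForm J ξ + (quatForm J ξ).flip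

lemma SxiBilin_apply (J : Fin 3 → E →L[ℝ] E) (ξ : E →L[ℝ] ℝ) (X Y : E) :
    SxiBilin J ξ X Y = SxiCLM J ξ X Y := by
  simp only [SxiBilin, SxiCLM, quatForm_apply, ContinuousLinearMap.flip_apply, add_apply,
    sub_apply, smul_apply, sum_apply, one_apply_eq_self]
  abel

lemma SxiBilin_comm (J : Fin 3 → E →L[ℝ] E) (ξ : E →L[ℝ] ℝ) (X Y : E) :
    SxiBilin J ξ X Y = SxiBilin J ξ Y X :=
  add_comm _ _

namespace IsQuatTripleCLM

variable {J : Fin 3 → E →L[ℝ] E}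

lemma comp_sub_comp (hJ : IsQuatTripleCLM J) (a b : Fin 3) :
    (J a).comp (J b) - (J b).comp (J a) = (2 : ℝ) • ∑ c, eps3 a b c • J c := by
  simp only [hJ a b, hJ b a, eq_comm (a := b), eps3_swap a b, neg_smul, Finset.sum_neg_distrib]
  module

lemma sum_smul_comp (hJ : IsQuatTripleCLM J) (x : Fin 3 → ℝ) (a : Fin 3) :
    ∑ b, x b • (J a).comp (J b) = -(x a • 1) + ∑ b, ∑ c, (eps3 a b c * x b) • J c := by
  simp [hJ a, smul_add, Finset.sum_add_distrib, Finset.smul_sum, smul_smul, mul_comm]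

lemma sum_apply_apply_smul (hJ : IsQuatTripleCLM J) (ξ : E →L[ℝ] ℝ) (a : Fin 3) (X : E) :
    ∑ b, ξ (J b (J a X)) • J b
      = -(ξ X • J a) + ∑ b, ∑ c, (eps3 a b c * ξ (J b X)) • J c := by
  have apply_apply (b : Fin 3) :
      ξ (J b (J a X)) = -(if b = a then ξ X else 0) + ∑ c, eps3 a c b * ξ (J c X) := by
    rw [← ContinuousLinearMap.comp_apply (J b), hJ b a]
    split_ifs <;> simp [eps3_rotate b a]
  simp only [apply_apply, add_smul, Finset.sum_add_distrib, Finset.sum_smul]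
  rw [Finset.sum_comm]
  simp

lemma quatForm_apply_apply (hJ : IsQuatTripleCLM J) (ξ : E →L[ℝ] ℝ) (a : Fin 3) (X : E) :
    quatForm J ξ (J a X) = (J a).comp (quatForm J ξ X) := by
  have comp_quatForm : (J a).comp (quatForm J ξ X)
      = ξ X • J a - ∑ b, ξ (J b X) • (J a).comp (J b) := by
    ext Y
    simp [quatForm_apply]
  rw [comp_quatForm, quatForm_apply, hJ.sum_apply_apply_smul, hJ.sum_smul_comp]
  abel

lemma quatForm_comp_sub_comp (hJ : IsQuatTripleCLM J) (ξ : E →L[ℝ] ℝ) (a : Fin 3) (X : E) :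
    (quatForm J ξ X).comp (J a) - (J a).comp (quatForm J ξ X)
      = (2 : ℝ) • ∑ b, ∑ c, (eps3 a b c * ξ (J b X)) • J c := by
  calc (quatForm J ξ X).comp (J a) - (J a).comp (quatForm J ξ X)
      = ∑ b, ξ (J b X) • ((J a).comp (J b) - (J b).comp (J a)) := by
        ext Y
        simp [quatForm_apply, smul_sub]
    _ = (2 : ℝ) • ∑ b, ∑ c, (eps3 a b c * ξ (J b X)) • J c := by
        simp only [hJ.comp_sub_comp, Finset.smul_sum, smul_smul, mul_comm (ξ _), mul_assoc]

lemma flip_quatForm_comp (hJ : IsQuatTripleCLM J) (ξ : E →L[ℝ] ℝ) (a : Fin 3) (X : E) :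
    ((quatForm J ξ).flip X).comp (J a) = (J a).comp ((quatForm J ξ).flip X) :=
  ContinuousLinearMap.ext fun Y => DFunLike.congr_fun (hJ.quatForm_apply_apply ξ a Y) X

lemma SxiBilin_comp_sub_comp (hJ : IsQuatTripleCLM J) (ξ : E →L[ℝ] ℝ) (a : Fin 3) (X : E) :
    (SxiBilin J ξ X).comp (J a) - (J a).comp (SxiBilin J ξ X)
      = (2 : ℝ) • ∑ b, ∑ c, (eps3 a b c * ξ (J b X)) • J c := by
  rw [← hJ.quatForm_comp_sub_comp, SxiBilin, add_apply, ContinuousLinearMap.add_comp,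
    ContinuousLinearMap.comp_add, hJ.flip_quatForm_comp, add_sub_add_right_eq_sub]

end IsQuatTripleCLM

/-- The covariant derivative `∇_X A = D_X A + [Γ_X, A]` at the point `p` of a field `A` of
endomorphisms. Only the value `Γ` of the connection coefficients at `p` enters. -/
def covDerivAt (Γ : E →L[ℝ] E →L[ℝ] E) (A : E → E →L[ℝ] E) (p X : E) : E →L[ℝ] E :=
  fderiv ℝ A p X + (Γ X).comp (A p) - (A p).comp (Γ X)

lemma covDerivAt_add (Γ S : E →L[ℝ] E →L[ℝ] E) (A : E → E →L[ℝ] E) (p X : E) :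
    covDerivAt (Γ + S) A p X
      = covDerivAt Γ A p X + ((S X).comp (A p) - (A p).comp (S X)) := by
  simp only [covDerivAt, add_apply, ContinuousLinearMap.add_comp, ContinuousLinearMap.comp_add]
  abel

/-- The quaternionic condition `∇_X J^a + 2 Σ_{b,c} ε^{abc} ω^b(X) J^c = 0` at the point `p`, for
the values `Γ` and `ω` at `p` of the connection coefficients and of the triplet of 1-forms.
Differentiability of `J` at `p` is part of it, as `fderiv` is `0` where there is no derivative. -/
structure IsQuaternionicAt (J : E → Fin 3 → E →L[ℝ] E) (Γ : E →L[ℝ] E →L[ℝ] E)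
    (ω : Fin 3 → E →L[ℝ] ℝ) (p : E) : Prop where
  differentiableAt : DifferentiableAt ℝ J p
  covDerivAt_add_eq_zero (a : Fin 3) (X : E) :
    covDerivAt Γ (fun q => J q a) p X
      + (2 : ℝ) • ∑ b, ∑ c, (eps3 a b c * ω b X) • J p c = 0

lemma IsQuaternionicAt.add_SxiBilin {J : E → Fin 3 → E →L[ℝ] E} {Γ : E →L[ℝ] E →L[ℝ] E}
    {ω : Fin 3 → E →L[ℝ] ℝ} {p : E} (hΓ : IsQuaternionicAt J Γ ω p)
    (hJ : IsQuatTripleCLM (J p)) (ξ : E →L[ℝ] ℝ) :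
    IsQuaternionicAt J (Γ + SxiBilin (J p) ξ) (fun a => ω a - ξ.comp (J p a)) p where
  differentiableAt := hΓ.differentiableAt
  covDerivAt_add_eq_zero a X := by
    rw [covDerivAt_add, hJ.SxiBilin_comp_sub_comp, ← hΓ.covDerivAt_add_eq_zero a X]
    simp [mul_sub, sub_smul, smul_sub]

theorem stmt7_general {J : E → Fin 3 → E →L[ℝ] E} {Γ : E →L[ℝ] E →L[ℝ] E}
    {ω : Fin 3 → E →L[ℝ] ℝ} {p : E} (ξ : E →L[ℝ] ℝ) (hJ : IsQuatTripleCLM (J p))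
    (htor : ∀ X Y, Γ X Y = Γ Y X) (hΓ : IsQuaternionicAt J Γ ω p) :
    (∀ X Y, (Γ + SxiBilin (J p) ξ) X Y = (Γ + SxiBilin (J p) ξ) Y X) ∧
      IsQuaternionicAt J (Γ + SxiBilin (J p) ξ) (fun a => ω a - ξ.comp (J p a)) p :=
  ⟨fun X Y => congrArg₂ (· + ·) (htor X Y) (SxiBilin_comm (J p) ξ X Y), hΓ.add_SxiBilin hJ ξ⟩

end

/-- ξ-transformations.  If `(Γ, ω)` satisfies the quaternionic condition for
a smooth field of quaternionic triples, then for any 1-form field `ξ` the shifted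
connection `Γ' = Γ + S^ξ` is torsionless and satisfies the quaternionic condition with
`ω'^a = ω^a - ξ ∘ J^a`. -/
theorem stmt7 {E : Type*} [NormedAddCommGroup E] [NormedSpace ℝ E] [FiniteDimensional ℝ E]
    (U : Set E) (hU : IsOpen U)
    (J : E → Fin 3 → E →L[ℝ] E) (Γ : E → E →L[ℝ] E →L[ℝ] E)
    (ω : E → Fin 3 → E →L[ℝ] ℝ) (ξ : E → E →L[ℝ] ℝ)
    (hJsm : ContDiffOn ℝ (⊤ : ℕ∞) J U) (hΓsm : ContDiffOn ℝ (⊤ : ℕ∞) Γ U)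
    (hωsm : ContDiffOn ℝ (⊤ : ℕ∞) ω U) (hξsm : ContDiffOn ℝ (⊤ : ℕ∞) ξ U)
    (hquat : ∀ p ∈ U, IsQuatTripleCLM (J p))
    (htor : ∀ p ∈ U, ∀ X Y : E, Γ p X Y = Γ p Y X)
    (hqc : ∀ p ∈ U, ∀ (a : Fin 3) (X : E),
      fderiv ℝ (fun q => J q a) p X
        + (Γ p X).comp (J p a) - (J p a).comp (Γ p X)
        + (2 : ℝ) • ∑ b, ∑ c, (eps3 a b c * ω p b X) • J p c = 0) :
    (∀ p ∈ U, ∀ X Y : E,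
      Γ p X Y + SxiCLM (J p) (ξ p) X Y = Γ p Y X + SxiCLM (J p) (ξ p) Y X) ∧
    (∀ p ∈ U, ∀ (a : Fin 3) (X Y : E),
      fderiv ℝ (fun q => J q a) p X Y
        + (Γ p X (J p a Y) + SxiCLM (J p) (ξ p) X (J p a Y))
        - J p a (Γ p X Y + SxiCLM (J p) (ξ p) X Y)
        + (2 : ℝ) • ∑ b, ∑ c,
            (eps3 a b c * (ω p b X - ξ p (J p b X))) • J p c Y = 0) := by
  have shifted p (hp : p ∈ U) := stmt7_general (ξ p) (hquat p hp) (htor p hp)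
    ⟨(hJsm.contDiffAt (hU.mem_nhds hp)).differentiableAt (by simp), hqc p hp⟩
  simp only [← SxiBilin_apply]
  exact ⟨fun p hp => (shifted p hp).1, fun p hp a X Y => by
    simpa [covDerivAt] using DFunLike.congr_fun ((shifted p hp).2.covDerivAt_add_eq_zero a X) Y⟩
end
end
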